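/- Let α and n be positive integers with α ≤ n ≤ 2α. Then every hke collection F with α(F) = α and |⋃F| = n satisfies |F| ≤ 2^{n−α}, and there exists an hke collection F with α(F) = α, |⋃F| = n and |F| = 2^{n−α}. In other words, the maximal cardinality a(α,n) of an hke collection F with α(F) = α and |⋃F| = n equals 2^{n−α}. -/

import Mathlib

open Finset

/-- The union of a finite collection of finite sets. -/
def famUnion (Γ : Finset (Finset ℕ)) : Finset ℕ := Γ.sup id

/-- The intersection of a finite collection of finite sets
(equal to the usual intersection when the collection is nonempty). -/
def famInter (Γ : Finset (Finset ℕ)) : Finset ℕ :=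
  (Γ.sup id).filter (fun x => ∀ A ∈ Γ, x ∈ A)

/-- `F` is a hereditary König–Egerváry (hke) collection with `α(F) = α`:
`α` is a positive integer and `|⋃Γ| + |⋂Γ| = 2α` for every nonempty subcollection `Γ` of `F`. -/
def IsHKE (F : Finset (Finset ℕ)) (α : ℕ) : Prop :=
  0 < α ∧ ∀ Γ ⊆ F, Γ.Nonempty → (famUnion Γ).card + (famInter Γ).card = 2 * α

/-!
Upper bound: fix `A ∈ F`. If `A ∩ B = A ∩ C`, then adding `C` to the subcollection `{A, B}` does not
change the intersection, hence not the union either, so `C ⊆ A ∪ B` and therefore `C ⊆ B`. Thus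
`B ↦ A ∩ B` embeds `F` into the interval `[⋂F, A]`, whose length is
`|A| - |⋂F| = α - (2α - n) = n - α`.

Sharpness: pair `x` with `2α - 1 - x` in `{0, …, 2α - 1}`. If every member of `Γ` picks exactly one
point of each pair, then the pairing sends `⋂Γ` onto the complement of `⋃Γ`, so
`|⋃Γ| + |⋂Γ| = 2α`. Those picks that avoid `{n, …, 2α - 1}` are determined by their points below
`α`, which form an arbitrary set between `{0, …, 2α - n - 1}` and `{0, …, α - 1}`.
-/

section FamilyOperations

variable {Γ : Finset (Finset ℕ)} {A : Finset ℕ} {x : ℕ}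

theorem mem_famUnion : x ∈ famUnion Γ ↔ ∃ A ∈ Γ, x ∈ A := by
  simp [famUnion, mem_sup]

theorem mem_famInter (hΓ : Γ.Nonempty) : x ∈ famInter Γ ↔ ∀ A ∈ Γ, x ∈ A := by
  obtain ⟨A, hA⟩ := hΓ
  exact mem_filter.trans
    (and_iff_right_of_imp fun hx => mem_famUnion.2 ⟨A, hA, hx A hA⟩)

theorem famInter_subset_of_mem (hA : A ∈ Γ) : famInter Γ ⊆ A :=
  fun _ hx => (mem_famInter ⟨A, hA⟩).1 hx A hA

theorem famUnion_singleton (A : Finset ℕ) : famUnion {A} = A :=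
  sup_singleton

theorem famUnion_insert (A : Finset ℕ) (Γ : Finset (Finset ℕ)) :
    famUnion (insert A Γ) = A ∪ famUnion Γ :=
  sup_insert

theorem famInter_singleton (A : Finset ℕ) : famInter {A} = A := by
  ext x
  simp [mem_famInter]

theorem famInter_insert (A : Finset ℕ) (hΓ : Γ.Nonempty) :
    famInter (insert A Γ) = A ∩ famInter Γ := by
  ext x
  simp [mem_famInter, hΓ]

end FamilyOperations

namespace IsHKE

variable {F Γ : Finset (Finset ℕ)} {A B C : Finset ℕ} {α : ℕ}

theorem card_eq_of_mem (hF : IsHKE F α) (hA : A ∈ F) : #A = α := by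
  have h := hF.2 {A} (singleton_subset_iff.2 hA) (singleton_nonempty A)
  rw [famUnion_singleton, famInter_singleton] at h
  omega

theorem subset_famUnion_of_famInter_subset (hF : IsHKE F α) (hΓF : Γ ⊆ F) (hΓ : Γ.Nonempty)
    (hC : C ∈ F) (hΓC : famInter Γ ⊆ C) : C ⊆ famUnion Γ := by
  have h := hF.2 Γ hΓF hΓ
  have h_insert := hF.2 (insert C Γ) (insert_subset hC hΓF) (insert_nonempty C Γ)
  rw [famUnion_insert, famInter_insert C hΓ, inter_eq_right.2 hΓC] at h_insert
  have h_union : famUnion Γ = C ∪ famUnion Γ :=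
    eq_of_subset_of_card_le subset_union_right (by omega)
  exact union_eq_right.1 h_union.symm

theorem subset_of_inter_eq_inter (hF : IsHKE F α) (hA : A ∈ F) (hB : B ∈ F) (hC : C ∈ F)
    (h : A ∩ B = A ∩ C) : C ⊆ B := by
  have hC_union : C ⊆ A ∪ B := by
    have hΓ := hF.subset_famUnion_of_famInter_subset (Γ := {A, B}) (by grind)
      (insert_nonempty A {B}) hC
    rw [famInter_insert A (singleton_nonempty B), famInter_singleton, famUnion_insert,
      famUnion_singleton] at hΓ
    exact hΓ (h ▸ inter_subset_right)
  calc C = (A ∩ C) ∪ (B ∩ C) := by rw [← union_inter_distrib_right, inter_eq_right.2 hC_union]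
    _ = (A ∩ B) ∪ (B ∩ C) := by rw [h]
    _ ⊆ B := union_subset inter_subset_right inter_subset_left

theorem injOn_inter_left (hF : IsHKE F α) (hA : A ∈ F) :
    Set.InjOn (fun B => A ∩ B) (F : Set (Finset ℕ)) :=
  fun _ hB _ hC h => (hF.subset_of_inter_eq_inter hA hC hB h.symm).antisymm
    (hF.subset_of_inter_eq_inter hA hB hC h)

theorem card_le_two_pow (hF : IsHKE F α) : #F ≤ 2 ^ (#(famUnion F) - α) := by
  obtain rfl | ⟨A, hA⟩ := F.eq_empty_or_nonempty
  · simp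
  have h_maps : Set.MapsTo (fun B => A ∩ B) (F : Set (Finset ℕ)) (Icc (famInter F) A) :=
    fun B hB => mem_Icc.2
      ⟨subset_inter (famInter_subset_of_mem hA) (famInter_subset_of_mem hB), inter_subset_left⟩
  have h_exponent : α - #(famInter F) = #(famUnion F) - α := by
    have := hF.2 F Subset.rfl ⟨A, hA⟩
    omega
  calc #F ≤ #(Icc (famInter F) A) := card_le_card_of_injOn _ h_maps (hF.injOn_inter_left hA)
    _ = 2 ^ (α - #(famInter F)) := by
      rw [card_Icc_finset (famInter_subset_of_mem hA), hF.card_eq_of_mem hA]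
    _ = 2 ^ (#(famUnion F) - α) := by rw [h_exponent]

end IsHKE

/-- `A` is a subset of `X` containing exactly one of `x` and `σ x` for every `x ∈ X`; meant for `σ`
that restricts to an involution of `X`, where `A` is a transversal of the orbits `{x, σ x}`. -/
def IsPairTransversal (σ : ℕ → ℕ) (X A : Finset ℕ) : Prop :=
  A ⊆ X ∧ ∀ x ∈ X, σ x ∈ A ↔ x ∉ A

section PairTransversal

variable {σ : ℕ → ℕ} {X : Finset ℕ} {Γ F : Finset (Finset ℕ)} {α : ℕ}

theorem apply_mem_famInter_iff_notMem_famUnion (hΓ : Γ.Nonempty)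
    (hT : ∀ A ∈ Γ, IsPairTransversal σ X A) {x : ℕ} (hx : x ∈ X) :
    σ x ∈ famInter Γ ↔ x ∉ famUnion Γ := by
  rw [mem_famInter hΓ, mem_famUnion]
  push Not
  exact forall₂_congr fun A hA => (hT A hA).2 x hx

theorem card_famUnion_add_card_famInter_of_isPairTransversal (hσX : Set.MapsTo σ X X)
    (hσ : ∀ x ∈ X, σ (σ x) = x) (hΓ : Γ.Nonempty) (hT : ∀ A ∈ Γ, IsPairTransversal σ X A) :
    #(famUnion Γ) + #(famInter Γ) = #X := by
  have h_union : famUnion Γ ⊆ X := Finset.sup_le fun A hA => (hT A hA).1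
  have h_inter : famInter Γ ⊆ X := (filter_subset _ _).trans h_union
  have h_card : #(X \ famUnion Γ) = #(famInter Γ) := by
    refine card_nbij' σ σ (fun x hx => ?_) (fun x hx => ?_)
      (fun x hx => hσ x (mem_sdiff.1 hx).1) (fun x hx => hσ x (h_inter hx))
    · obtain ⟨hxX, hxU⟩ := mem_sdiff.1 hx
      exact (apply_mem_famInter_iff_notMem_famUnion hΓ hT hxX).2 hxU
    · have hσx : σ x ∈ X := hσX (h_inter hx)
      refine mem_sdiff.2 ⟨hσx, (apply_mem_famInter_iff_notMem_famUnion hΓ hT hσx).1 ?_⟩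
      rwa [hσ x (h_inter hx)]
  rw [← h_card, add_comm, card_sdiff_add_card_eq_card h_union]

theorem isHKE_of_isPairTransversal (hα : 0 < α) (hX : #X = 2 * α) (hσX : Set.MapsTo σ X X)
    (hσ : ∀ x ∈ X, σ (σ x) = x) (hT : ∀ A ∈ F, IsPairTransversal σ X A) : IsHKE F α :=
  ⟨hα, fun _ hΓF hΓ =>
    (card_famUnion_add_card_famInter_of_isPairTransversal hσX hσ hΓ
      fun A hA => hT A (hΓF hA)).trans hX⟩

end PairTransversal

/-- The transversal of the pairs `{x, 2α - 1 - x}` in `{0, …, 2α - 1}` whose points below `α` are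
those of `S`. -/
def reflTransversal (α : ℕ) (S : Finset ℕ) : Finset ℕ :=
  {x ∈ range (2 * α) | if x < α then x ∈ S else 2 * α - 1 - x ∉ S}

/-- The transversals of the pairs `{x, 2α - 1 - x}` in `{0, …, 2α - 1}` that are contained in
`{0, …, n - 1}`, for `α ≤ n ≤ 2α`. They are the extremal hke collection; containment in
`{0, …, n - 1}` is encoded as the presence of the points paired with `n, …, 2α - 1`. -/
def reflTransversals (α n : ℕ) : Finset (Finset ℕ) :=
  (Icc (range (2 * α - n)) (range α)).image (reflTransversal α)

section ReflTransversal

variable {α n x : ℕ} {S : Finset ℕ}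

theorem mem_reflTransversal_of_lt (hx : x < α) : x ∈ reflTransversal α S ↔ x ∈ S := by
  have hx_lt : x < 2 * α := by omega
  simp [reflTransversal, hx, hx_lt]

theorem mem_reflTransversal_of_le (hx : α ≤ x) :
    x ∈ reflTransversal α S ↔ x < 2 * α ∧ 2 * α - 1 - x ∉ S := by
  simp [reflTransversal, hx.not_gt]

theorem isPairTransversal_reflTransversal (α : ℕ) (S : Finset ℕ) :
    IsPairTransversal (fun x => 2 * α - 1 - x) (range (2 * α)) (reflTransversal α S) := by
  refine ⟨filter_subset _ _, fun x hx => ?_⟩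
  have hx_lt := mem_range.1 hx
  have h_invol : 2 * α - 1 - (2 * α - 1 - x) = x := by omega
  have h_refl_lt : 2 * α - 1 - x < 2 * α := by omega
  beta_reduce
  obtain hxα | hxα := lt_or_ge x α
  · rw [mem_reflTransversal_of_le (by omega), mem_reflTransversal_of_lt hxα, h_invol,
      and_iff_right h_refl_lt]
  · rw [mem_reflTransversal_of_lt (by omega), mem_reflTransversal_of_le hxα,
      and_iff_right hx_lt, not_not]

theorem isHKE_reflTransversals (hα : 0 < α) (n : ℕ) : IsHKE (reflTransversals α n) α := by
  refine isHKE_of_isPairTransversal (σ := fun x => 2 * α - 1 - x) hα (card_range _)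
    (fun x hx => ?_) (fun x hx => ?_)
    (forall_mem_image.2 fun S _ => isPairTransversal_reflTransversal α S)
  · simp only [coe_range, Set.mem_Iio] at hx ⊢
    omega
  · have := mem_range.1 hx
    omega

theorem reflTransversal_inter_range (hS : S ⊆ range α) :
    reflTransversal α S ∩ range α = S := by
  ext x
  rw [mem_inter, mem_range, and_congr_left fun hx => mem_reflTransversal_of_lt hx]
  exact and_iff_left_of_imp fun hx => mem_range.1 (hS hx)

theorem card_reflTransversals (h₁ : α ≤ n) (h₂ : n ≤ 2 * α) :
    #(reflTransversals α n) = 2 ^ (n - α) := by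
  have h_inj : Set.InjOn (reflTransversal α) (Icc (range (2 * α - n)) (range α)) := by
    intro S hS T hT h
    rw [← reflTransversal_inter_range (mem_Icc.1 hS).2, h,
      reflTransversal_inter_range (mem_Icc.1 hT).2]
  have h_exponent : α - (2 * α - n) = n - α := by omega
  rw [reflTransversals, card_image_of_injOn h_inj,
    card_Icc_finset (range_subset_range.2 (by omega)), card_range, card_range, h_exponent]

theorem reflTransversal_subset_range (h₁ : α ≤ n) (hS : range (2 * α - n) ⊆ S) :
    reflTransversal α S ⊆ range n := by
  intro x hx
  by_contra hxn
  rw [mem_range, not_lt] at hxn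
  obtain ⟨hx_lt, hx_notMem⟩ := (mem_reflTransversal_of_le (h₁.trans hxn)).1 hx
  exact hx_notMem (hS (mem_range.2 (by omega)))

theorem famUnion_reflTransversals (h₁ : α ≤ n) (h₂ : n ≤ 2 * α) :
    famUnion (reflTransversals α n) = range n := by
  refine Subset.antisymm (Finset.sup_le (forall_mem_image.2 fun S hS =>
    reflTransversal_subset_range h₁ (mem_Icc.1 hS).1)) fun x hx => ?_
  have h_le : range (2 * α - n) ≤ range α := range_subset_range.2 (by omega)
  have hx_lt := mem_range.1 hx
  rw [mem_famUnion]
  obtain hxα | hxα := lt_or_ge x α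
  · exact ⟨_, mem_image_of_mem _ (right_mem_Icc.2 h_le),
      (mem_reflTransversal_of_lt hxα).2 (mem_range.2 hxα)⟩
  · refine ⟨_, mem_image_of_mem _ (left_mem_Icc.2 h_le),
      (mem_reflTransversal_of_le hxα).2 ⟨by omega, ?_⟩⟩
    rw [mem_range]
    omega

end ReflTransversal

/-- for positive integers `α ≤ n ≤ 2α`, every hke collection `F` with
`α(F) = α` and `|⋃F| = n` satisfies `|F| ≤ 2 ^ (n − α)`, and there exists such an hke
collection with `|F| = 2 ^ (n − α)`; i.e. `a(α, n) = 2 ^ (n − α)`. -/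
theorem max_card_hke_with_union (α n : ℕ) (hα : 0 < α) (h₁ : α ≤ n) (h₂ : n ≤ 2 * α) :
    (∀ F : Finset (Finset ℕ), IsHKE F α → (famUnion F).card = n →
      F.card ≤ 2 ^ (n - α)) ∧
    (∃ F : Finset (Finset ℕ), IsHKE F α ∧ (famUnion F).card = n ∧
      F.card = 2 ^ (n - α)) := by
  constructor
  · rintro F hF rfl
    exact hF.card_le_two_pow
  · refine ⟨reflTransversals α n, isHKE_reflTransversals hα n, ?_, card_reflTransversals h₁ h₂⟩
    rw [famUnion_reflTransversals h₁ h₂, card_range]
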